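/- arXiv:2312.13916 — 2 statements merged into one kernel-verified Lean document; each statement's English description precedes it below -/
import Mathlib

section
/- For every finite-index subgroup Γ̄ of PSL(2,ℤ), the short exact sequence 1 → {±I} → ξ⁻¹(Γ̄) → Γ̄ → 1 splits (that is, there exists a group homomorphism s : Γ̄ → SL(2,ℤ) with ξ ∘ s equal to the inclusion of Γ̄ into PSL(2,ℤ); equivalently, there exists a subgroup Γ of SL(2,ℤ) with ξ(Γ) = Γ̄ and −I ∉ Γ) if and only if Γ̄ contains no element of order 2. -/
open Matrix

/-- `SL(2,ℤ)`: the group of 2×2 integer matrices of determinant 1. -/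
abbrev SL2Z := Matrix.SpecialLinearGroup (Fin 2) ℤ

instance : Fact (Even (Fintype.card (Fin 2))) := ⟨by simp⟩

/-- The subgroup `{±I}` of `SL(2,ℤ)`. -/
def pmOne : Subgroup SL2Z := Subgroup.zpowers (-1 : SL2Z)

instance : pmOne.Normal := by
  constructor
  intro x hx g
  obtain ⟨n, rfl⟩ := hx
  have h : Commute ((-1 : SL2Z) ^ n) g := (Commute.neg_one_left g).zpow_left n
  refine ⟨n, ?_⟩
  rw [← h.eq, mul_assoc, mul_inv_cancel, mul_one]

/-- `PSL(2,ℤ)`, the modular group, as the quotient of `SL(2,ℤ)` by `{±I}`. -/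
abbrev PSL2Z := SL2Z ⧸ pmOne

/-- The natural projection `ξ : SL(2,ℤ) → PSL(2,ℤ)`. -/
def xi : SL2Z →* PSL2Z := QuotientGroup.mk' pmOne

/-- The element `S` of `PSL(2,ℤ)`, the image of `[[0,-1],[1,0]]`. -/
def Sp : PSL2Z := xi ⟨!![0, -1; 1, 0], by norm_num [Matrix.det_fin_two_of]⟩

/-- The element `T` of `PSL(2,ℤ)`, the image of `[[1,1],[0,1]]`. -/
def Tp : PSL2Z := xi ⟨!![1, 1; 0, 1], by norm_num [Matrix.det_fin_two_of]⟩

/-- The number of left cosets in `PSL(2,ℤ)/Γ` fixed by `g` (for the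
left-multiplication action).  For `g = S` this is `e₂(Γ)`, for `g = S*T` it is `e₃(Γ)`. -/
noncomputable def nFix (g : PSL2Z) (Γ : Subgroup PSL2Z) : ℕ :=
  Nat.card {x : PSL2Z ⧸ Γ // g • x = x}

/-- The number of orbits of the cyclic subgroup generated by `g` on `PSL(2,ℤ)/Γ`.
For `g = S, S*T, T` these are `c₂(Γ), c₃(Γ), h(Γ)` respectively. -/
noncomputable def nOrb (g : PSL2Z) (Γ : Subgroup PSL2Z) : ℕ :=
  Nat.card (MulAction.orbitRel.Quotient (Subgroup.zpowers g) (PSL2Z ⧸ Γ))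

/-- `Γ` has genus zero: `c₂(Γ) + c₃(Γ) + h(Γ) = index(Γ) + 2`. -/
def GenusZero (Γ : Subgroup PSL2Z) : Prop :=
  nOrb Sp Γ + nOrb (Sp * Tp) Γ + nOrb Tp Γ = Γ.index + 2

/-- `Γ` is torsion free: it contains no nontrivial element of finite order. -/
def TorsionFree (Γ : Subgroup PSL2Z) : Prop :=
  ∀ x ∈ Γ, x ≠ 1 → ¬ IsOfFinOrder x

/-- Two subgroups of a group are conjugate. -/
def SubgroupConj {G : Type*} [Group G] (H K : Subgroup G) : Prop :=
  ∃ g : G, Subgroup.map (MulAut.conj g).toMonoidHom H = K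

/-- The number of conjugacy classes of subgroups of `PSL(2,ℤ)` satisfying `P`. -/
noncomputable def countClasses (P : Subgroup PSL2Z → Prop) : ℕ :=
  Nat.card (Quot fun A B : {Γ : Subgroup PSL2Z // P Γ} => SubgroupConj A.1 B.1)

/-- The index of the torsion free subgroup `Γ^tf` associated to `Γ`:
`index(Γ) + 3·e₂(Γ) + 2·e₃(Γ)`. -/
noncomputable def tfIdx (Γ : Subgroup PSL2Z) : ℕ :=
  Γ.index + 3 * nFix Sp Γ + 2 * nFix (Sp * Tp) Γ


namespace SplitAux

open Pointwise Cardinal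

def Sm : SL2Z := ModularGroup.S

def Um : SL2Z := ⟨!![1, -1; 1, 0], by norm_num [Matrix.det_fin_two_of]⟩

lemma mulA (g h : SL2Z) (i j : Fin 2) : (g * h) i j = g i 0 * h 0 j + g i 1 * h 1 j := by
  rw [Matrix.SpecialLinearGroup.coe_mul, Matrix.mul_apply, Fin.sum_univ_two]

lemma Sm_sq : Sm * Sm = -1 := by
  ext i j; fin_cases i <;> fin_cases j <;> simp only [mulA] <;> simp [Sm, ModularGroup.S]

lemma Um_cube : Um * Um * Um = -1 := by
  ext i j; fin_cases i <;> fin_cases j <;> simp only [mulA] <;> simp [Um]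

lemma Um_eq : ModularGroup.T * Sm = Um := by
  ext i j; fin_cases i <;> fin_cases j <;>
    simp only [mulA] <;> simp [Um, Sm, ModularGroup.S, ModularGroup.T]

lemma mem_pm {g : SL2Z} : g ∈ pmOne ↔ g = 1 ∨ g = -1 := by
  constructor
  · rintro ⟨n, rfl⟩
    rcases Int.even_or_odd n with h | h
    · left; exact h.neg_one_zpow
    · right; exact h.neg_one_zpow
  · rintro (rfl | rfl)
    · exact one_mem _
    · exact Subgroup.mem_zpowers _

lemma xi_one_iff {g : SL2Z} : xi g = 1 ↔ g = 1 ∨ g = -1 := by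
  rw [← mem_pm]; exact QuotientGroup.eq_one_iff g

lemma xi_eq {g h : SL2Z} (H : xi g = xi h) : g = h ∨ g = -h := by
  have : xi (g * h⁻¹) = 1 := by rw [map_mul, map_inv, H, mul_inv_cancel]
  rcases xi_one_iff.1 this with h1 | h1
  · left; exact mul_inv_eq_one.1 h1
  · right; rw [mul_inv_eq_iff_eq_mul] at h1; simpa using h1

lemma xi_neg (g : SL2Z) : xi (-g) = xi g := by
  have h : xi (-1) = 1 := xi_one_iff.2 (Or.inr rfl)
  rw [← neg_one_mul, map_mul, h, one_mul]

lemma neg_one_ne : (-1 : SL2Z) ≠ 1 := by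
  intro h
  have := congrArg (fun g : SL2Z => g 0 0) h
  simp at this

lemma sq_one {g : SL2Z} (h : g * g = 1) : g = 1 ∨ g = -1 := by
  have e : ∀ i j, (g * g) i j = (1 : SL2Z) i j := fun i j => by rw [h]
  have h00 := e 0 0
  have h01 := e 0 1
  have h10 := e 1 0
  have h11 := e 1 1
  have hd := Matrix.SpecialLinearGroup.det_coe g
  rw [Matrix.det_fin_two] at hd
  simp [Matrix.mul_apply, Fin.sum_univ_two] at h00 h01 h10 h11
  have t : g 0 0 + g 1 1 ≠ 0 := by
    intro t
    have : g 1 1 = - g 0 0 := by linarith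
    rw [this] at hd
    nlinarith
  have hb : g 0 1 = 0 := by
    have : g 0 1 * (g 0 0 + g 1 1) = 0 := by linarith
    exact (mul_eq_zero.1 this).resolve_right t
  have hc : g 1 0 = 0 := by
    have : g 1 0 * (g 0 0 + g 1 1) = 0 := by linarith
    exact (mul_eq_zero.1 this).resolve_right t
  rw [hb] at h00 hd
  have ha : (g 0 0 - 1) * (g 0 0 + 1) = 0 := by linarith
  rcases mul_eq_zero.1 ha with ha | ha
  · left
    have ha : g 0 0 = 1 := by linarith
    rw [ha] at hd
    ext i j; fin_cases i <;> fin_cases j <;> simp [ha, hb, hc] <;> linarith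
  · right
    have ha : g 0 0 = -1 := by linarith
    rw [ha] at hd
    ext i j; fin_cases i <;> fin_cases j <;> simp [ha, hb, hc] <;> linarith

def Sq : PSL2Z := xi Sm
def Uq : PSL2Z := xi Um

lemma Sq_sq : Sq ^ 2 = 1 := by
  rw [Sq, ← map_pow, pow_two, Sm_sq]; exact xi_one_iff.2 (Or.inr rfl)

lemma Uq_cube : Uq ^ 3 = 1 := by
  rw [Uq, ← map_pow, pow_succ, pow_two, Um_cube]; exact xi_one_iff.2 (Or.inr rfl)

lemma Sq_ne : Sq ≠ 1 := by
  intro h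
  rcases xi_one_iff.1 h with h | h <;>
  · have := congrArg (fun g : SL2Z => g 0 0) h
    simp [Sm, ModularGroup.S] at this

lemma gen : Subgroup.closure {Sq, Uq} = ⊤ := by
  rw [eq_top_iff]
  intro x _
  obtain ⟨g, rfl⟩ := QuotientGroup.mk_surjective x
  have hg : g ∈ Subgroup.closure {ModularGroup.S, ModularGroup.T} := by
    rw [SpecialLinearGroup.SL2Z_generators]; trivial
  change g ∈ (Subgroup.closure {Sq, Uq}).comap xi
  refine (Subgroup.closure_le _).2 ?_ hg
  have hS : Sq ∈ Subgroup.closure {Sq, Uq} := Subgroup.subset_closure (by simp)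
  have hU : Uq ∈ Subgroup.closure {Sq, Uq} := Subgroup.subset_closure (by simp)
  rintro y (rfl | rfl)
  · exact hS
  · change xi ModularGroup.T ∈ Subgroup.closure {Sq, Uq}
    have : xi ModularGroup.T = Uq * Sq⁻¹ := by
      rw [eq_mul_inv_iff_mul_eq, Uq, ← Um_eq, map_mul]; rfl
    rw [this]
    exact mul_mem hU (inv_mem hS)

/-- Homomorphism out of a cyclic group. -/
noncomputable def cyc {H : Type*} [Group H] (n : ℕ) (h : H) (hh : h ^ n = 1) :
    Multiplicative (ZMod n) →* H :=
  AddMonoidHom.toMultiplicativeLeft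
    (ZMod.lift n ⟨zmultiplesHom (Additive H) (Additive.ofMul h), by
      simp only [zmultiplesHom_apply, natCast_zsmul]
      exact hh⟩)

lemma cyc_apply {H : Type*} [Group H] (n : ℕ) (h : H) (hh : h ^ n = 1) (k : ℕ) :
    cyc n h hh (Multiplicative.ofAdd (k : ZMod n)) = h ^ k := by
  have := ZMod.lift_coe n ⟨zmultiplesHom (Additive H) (Additive.ofMul h), by
      simp only [zmultiplesHom_apply, natCast_zsmul]
      exact hh⟩ (k : ℤ)
  simp only [zmultiplesHom_apply, natCast_zsmul, Int.cast_natCast] at this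
  exact this

def nn (b : Bool) : ℕ := cond b 3 2

abbrev KK (b : Bool) : Type := Multiplicative (ZMod (nn b))

noncomputable def fam {H : Type*} [Group H] (s u : H) (hs : s ^ 2 = 1) (hu : u ^ 3 = 1) :
    (b : Bool) → KK b →* H
  | false => cyc 2 s hs
  | true => cyc 3 u hu

def XX : Bool → Set PSL2Z
  | false => {p | ∃ g : SL2Z, xi g = p ∧ g 0 0 * g 1 0 < 0}
  | true => {p | ∃ g : SL2Z, xi g = p ∧ 0 < g 0 0 * g 1 0}

lemma XX_disj : Disjoint (XX false) (XX true) := by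
  rw [Set.disjoint_left]
  rintro p ⟨g, rfl, hg⟩ ⟨h, hh, hp⟩
  rcases xi_eq hh with rfl | rfl
  · linarith
  · simp at hp; linarith

lemma S_pp {p : PSL2Z} (hp : p ∈ XX true) : Sq * p ∈ XX false := by
  obtain ⟨g, rfl, hg⟩ := hp
  refine ⟨Sm * g, by simp [Sq], ?_⟩
  simp only [mulA]
  simp [Sm, ModularGroup.S]
  linarith

lemma U_pp {p : PSL2Z} (hp : p ∈ XX false) : Uq * p ∈ XX true := by
  obtain ⟨g, rfl, hg⟩ := hp
  refine ⟨Um * g, by simp [Uq], ?_⟩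
  simp only [mulA]
  simp [Um]
  nlinarith [sq_nonneg (g 0 0)]

lemma UU_pp {p : PSL2Z} (hp : p ∈ XX false) : Uq ^ 2 * p ∈ XX true := by
  obtain ⟨g, rfl, hg⟩ := hp
  refine ⟨Um * (Um * g), by simp [Uq, pow_two, mul_assoc], ?_⟩
  simp only [mulA]
  simp [Um]
  nlinarith [sq_nonneg (g 1 0)]

lemma lift_inj : Function.Injective
    (Monoid.CoprodI.lift (fam Sq Uq Sq_sq Uq_cube)) := by
  apply Monoid.CoprodI.lift_injective_of_ping_pong (fam Sq Uq Sq_sq Uq_cube) (X := XX)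
  · right
    refine ⟨true, ?_⟩
    have : Cardinal.mk (KK true) = 3 := by
      change Cardinal.mk (ZMod 3) = 3
      rw [Cardinal.mk_fintype, ZMod.card]; rfl
    rw [this]
  · intro b
    cases b
    · exact ⟨_, ⟨⟨!![1, 0; -1, 1], by norm_num [Matrix.det_fin_two_of]⟩, rfl, by simp⟩⟩
    · exact ⟨_, ⟨⟨!![1, 0; 1, 1], by norm_num [Matrix.det_fin_two_of]⟩, rfl, by simp⟩⟩
  · intro i j hij
    cases i <;> cases j
    · exact absurd rfl hij
    · exact XX_disj
    · exact XX_disj.symm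
    · exact absurd rfl hij
  · intro i j hij h hne
    cases i <;> cases j
    · exact absurd rfl hij
    · have key : ∀ z : ZMod 2, z ≠ 0 → z = ((1 : ℕ) : ZMod 2) := by decide
      have hz : h = Multiplicative.ofAdd ((1 : ℕ) : ZMod 2) := key h hne
      have hf : fam Sq Uq Sq_sq Uq_cube false h = Sq := by
        rw [hz]; exact (cyc_apply 2 Sq Sq_sq 1).trans (pow_one _)
      rw [hf]
      rintro _ ⟨p, hp, rfl⟩
      exact S_pp hp
    · have key : ∀ z : ZMod 3, z ≠ 0 → z = ((1 : ℕ) : ZMod 3) ∨ z = ((2 : ℕ) : ZMod 3) := by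
        decide
      rcases key h hne with hz | hz
      · have hf : fam Sq Uq Sq_sq Uq_cube true h = Uq := by
          have hz : h = Multiplicative.ofAdd ((1 : ℕ) : ZMod 3) := hz
          rw [hz]; exact (cyc_apply 3 Uq Uq_cube 1).trans (pow_one _)
        rw [hf]
        rintro _ ⟨p, hp, rfl⟩
        exact U_pp hp
      · have hf : fam Sq Uq Sq_sq Uq_cube true h = Uq ^ 2 := by
          have hz : h = Multiplicative.ofAdd ((2 : ℕ) : ZMod 3) := hz
          rw [hz]; exact cyc_apply 3 Uq Uq_cube 2
        rw [hf]
        rintro _ ⟨p, hp, rfl⟩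
        exact UU_pp hp
    · exact absurd rfl hij

def cS : Monoid.CoprodI KK :=
  Monoid.CoprodI.of (i := false) (Multiplicative.ofAdd ((1 : ℕ) : ZMod 2) : KK false)
def cU : Monoid.CoprodI KK :=
  Monoid.CoprodI.of (i := true) (Multiplicative.ofAdd ((1 : ℕ) : ZMod 3) : KK true)

lemma lift_cS {H : Type*} [Group H] (s u : H) (hs : s ^ 2 = 1) (hu : u ^ 3 = 1) :
    Monoid.CoprodI.lift (fam s u hs hu) cS = s := by
  rw [cS, Monoid.CoprodI.lift_of]
  exact (cyc_apply 2 s hs 1).trans (pow_one _)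

lemma lift_cU {H : Type*} [Group H] (s u : H) (hs : s ^ 2 = 1) (hu : u ^ 3 = 1) :
    Monoid.CoprodI.lift (fam s u hs hu) cU = u := by
  rw [cU, Monoid.CoprodI.lift_of]
  exact (cyc_apply 3 u hu 1).trans (pow_one _)

lemma lift_surj : Function.Surjective
    (Monoid.CoprodI.lift (fam Sq Uq Sq_sq Uq_cube)) := by
  rw [← MonoidHom.range_eq_top, eq_top_iff, ← gen, Subgroup.closure_le]
  rintro x (rfl | rfl)
  · exact ⟨cS, lift_cS _ _ _ _⟩
  · exact ⟨cU, lift_cU _ _ _ _⟩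

/-- `PSL(2,ℤ)` is the free product of `ℤ/2` and `ℤ/3`. -/
lemma exists_hom {H : Type*} [Group H] (s u : H) (hs : s ^ 2 = 1) (hu : u ^ 3 = 1) :
    ∃ φ : PSL2Z →* H, φ Sq = s ∧ φ Uq = u := by
  let e := MulEquiv.ofBijective _ ⟨lift_inj, lift_surj⟩
  refine ⟨(Monoid.CoprodI.lift (fam s u hs hu)).comp e.symm.toMonoidHom, ?_, ?_⟩
  · have : e.symm Sq = cS := by
      rw [MulEquiv.symm_apply_eq]; exact (lift_cS Sq Uq Sq_sq Uq_cube).symm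
    change Monoid.CoprodI.lift (fam s u hs hu) (e.symm Sq) = s
    rw [this, lift_cS]
  · have : e.symm Uq = cU := by
      rw [MulEquiv.symm_apply_eq]; exact (lift_cU Sq Uq Sq_sq Uq_cube).symm
    change Monoid.CoprodI.lift (fam s u hs hu) (e.symm Uq) = u
    rw [this, lift_cU]

/-- An antisymmetric sign for a fixed point free involution. -/
lemma exists_sign {X : Type*} (σ : X → X) (h2 : ∀ x, σ (σ x) = x) (hf : ∀ x, σ x ≠ x) :
    ∃ ε : X → SL2Z, (∀ x, ε x = 1 ∨ ε x = -1) ∧ ∀ x, ε (σ x) = - ε x := by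
  classical
  refine ⟨fun x => if WellOrderingRel x (σ x) then 1 else -1, fun x => ?_, fun x => ?_⟩
  · by_cases h : WellOrderingRel x (σ x) <;> simp [h]
  · simp only [h2]
    rcases trichotomous_of WellOrderingRel x (σ x) with h | h | h
    · rw [if_pos h, if_neg (asymm h)]
    · exact absurd h.symm (hf x)
    · rw [if_pos h, if_neg (asymm h), neg_neg]

lemma exists_split (Γb : Subgroup PSL2Z) (hΓ : ∀ x ∈ Γb, orderOf x ≠ 2) :
    ∃ s : Γb →* SL2Z, ∀ x : Γb, xi (s x) = (x : PSL2Z) := by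
  have hSS : Sq * Sq = 1 := by rw [← pow_two, Sq_sq]
  have hfix : ∀ x : PSL2Z ⧸ Γb, Sq • x ≠ x := by
    intro x hx
    obtain ⟨g, rfl⟩ := QuotientGroup.mk_surjective x
    have hm : g⁻¹ * (Sq * g) ∈ Γb := QuotientGroup.eq.1 hx.symm
    refine hΓ _ hm (orderOf_eq_prime ?_ ?_)
    · have : (g⁻¹ * (Sq * g)) ^ 2 = g⁻¹ * (Sq * Sq) * g := by rw [pow_two]; group
      rw [this, hSS]; simp
    · intro h
      apply Sq_ne
      have := congrArg (fun y => g * y * g⁻¹) h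
      simpa [mul_assoc] using this
  obtain ⟨ε, hε, hε'⟩ := exists_sign (fun x : PSL2Z ⧸ Γb => Sq • x)
    (fun x => by rw [smul_smul, hSS, one_smul]) hfix
  let sf : (PSL2Z ⧸ Γb) × SL2Z → (PSL2Z ⧸ Γb) × SL2Z :=
    fun y => (Sq • y.1, ε y.1 * Sm * y.2)
  have hsf : ∀ y, sf (sf y) = y := by
    rintro ⟨x, A⟩
    refine Prod.ext ?_ ?_
    · change Sq • Sq • x = x
      rw [smul_smul, hSS, one_smul]
    · change ε (Sq • x) * Sm * (ε x * Sm * A) = A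
      rw [hε' x]
      have e : Sm * (Sm * A) = -A := by rw [← mul_assoc, Sm_sq, neg_one_mul]
      rcases hε x with h | h <;> rw [h] <;> simp [e, mul_assoc]
  let uf : (PSL2Z ⧸ Γb) × SL2Z → (PSL2Z ⧸ Γb) × SL2Z :=
    fun y => (Uq • y.1, -Um * y.2)
  have huf : ∀ y, uf (uf (uf y)) = y := by
    rintro ⟨x, A⟩
    refine Prod.ext ?_ ?_
    · change Uq • Uq • Uq • x = x
      rw [smul_smul, smul_smul, ← pow_two, ← pow_succ, Uq_cube, one_smul]
    · change -Um * (-Um * (-Um * A)) = A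
      have e : Um * (Um * (Um * A)) = -A := by
        rw [← mul_assoc, ← mul_assoc, Um_cube, neg_one_mul]
      simp [e]
  let s : Equiv.Perm ((PSL2Z ⧸ Γb) × SL2Z) := ⟨sf, sf, hsf, hsf⟩
  let u : Equiv.Perm ((PSL2Z ⧸ Γb) × SL2Z) := ⟨uf, fun y => uf (uf y), huf, huf⟩
  have hs : s ^ 2 = 1 := by rw [pow_two]; exact Equiv.ext hsf
  have hu : u ^ 3 = 1 := by rw [pow_succ, pow_two]; exact Equiv.ext huf
  obtain ⟨φ, hφs, hφu⟩ := exists_hom s u hs hu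
  have key : ∀ g : PSL2Z, ∀ x, ∃ B : SL2Z, xi B = g ∧ ∀ A, φ g (x, A) = (g • x, B * A) := by
    intro g
    have hg : g ∈ Subgroup.closure {Sq, Uq} := by rw [gen]; trivial
    induction hg using Subgroup.closure_induction with
    | mem g hg =>
      intro x
      rcases hg with rfl | rfl
      · refine ⟨ε x * Sm, ?_, fun A => by rw [hφs]; rfl⟩
        rcases hε x with h | h <;> rw [h]
        · rw [one_mul]; rfl
        · rw [neg_one_mul, xi_neg]; rfl
      · exact ⟨-Um, xi_neg _, fun A => by rw [hφu]; rfl⟩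
    | one => intro x; exact ⟨1, map_one _, fun A => by simp⟩
    | mul a b _ _ ha hb =>
      intro x
      obtain ⟨B, hB, hB'⟩ := hb x
      obtain ⟨C, hC, hC'⟩ := ha (b • x)
      refine ⟨C * B, by rw [map_mul, hB, hC], fun A => ?_⟩
      rw [map_mul, Equiv.Perm.mul_apply, hB', hC', smul_smul, mul_assoc]
    | inv a _ ha =>
      intro x
      obtain ⟨B, hB, hB'⟩ := ha (a⁻¹ • x)
      refine ⟨B⁻¹, by rw [map_inv, hB], fun A => ?_⟩
      rw [map_inv, Equiv.Perm.inv_eq_iff_eq, hB', smul_inv_smul, mul_inv_cancel_left]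
  let x0 : PSL2Z ⧸ Γb := ((1 : PSL2Z) : PSL2Z ⧸ Γb)
  have hx0 : ∀ g : Γb, (g : PSL2Z) • x0 = x0 := by
    intro g
    apply Eq.symm
    apply QuotientGroup.eq.2
    simp
  choose f hf hf' using fun g : Γb => key g x0
  refine ⟨MonoidHom.mk' f ?_, hf⟩
  intro a b
  have h1 := hf' (a * b) 1
  rw [Subgroup.coe_mul, map_mul, Equiv.Perm.mul_apply, hf' b, hx0 b, hf' a] at h1
  have h2 := congrArg Prod.snd h1
  simpa using h2.symm

end SplitAux

open SplitAux

/-- The short exact sequence `1 → {±I} → ξ⁻¹(Γ̄) → Γ̄ → 1` splits (equivalently, there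
is a subgroup `Γ ≤ SL(2,ℤ)` with `ξ(Γ) = Γ̄` and `-I ∉ Γ`) iff `Γ̄` contains no element
of order 2. -/
theorem splitting_iff_no_order_two (Γb : Subgroup PSL2Z) (hfi : Γb.index ≠ 0) :
    ((∃ s : Γb →* SL2Z, ∀ x : Γb, xi (s x) = (x : PSL2Z)) ↔ ∀ x ∈ Γb, orderOf x ≠ 2) ∧
    ((∃ Γ : Subgroup SL2Z, Subgroup.map xi Γ = Γb ∧ (-1 : SL2Z) ∉ Γ) ↔
      ∀ x ∈ Γb, orderOf x ≠ 2) := by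
  have step2 : (∃ Γ : Subgroup SL2Z, Subgroup.map xi Γ = Γb ∧ (-1 : SL2Z) ∉ Γ) →
      ∀ x ∈ Γb, orderOf x ≠ 2 := by
    rintro ⟨Γ, rfl, hn⟩ x ⟨g, hg, rfl⟩ ho
    have h2 : xi (g * g) = 1 := by
      rw [map_mul, ← pow_two]; exact orderOf_dvd_iff_pow_eq_one.1 (dvd_of_eq ho)
    have hgg : g * g ∈ Γ := mul_mem hg hg
    rcases xi_one_iff.1 h2 with h | h
    · have := xi_one_iff.2 (sq_one h)
      rw [this, orderOf_one] at ho
      omega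
    · rw [h] at hgg; exact hn hgg
  have step1 : (∃ s : Γb →* SL2Z, ∀ x : Γb, xi (s x) = (x : PSL2Z)) →
      (∃ Γ : Subgroup SL2Z, Subgroup.map xi Γ = Γb ∧ (-1 : SL2Z) ∉ Γ) := by
    rintro ⟨s, hs⟩
    refine ⟨s.range, ?_, ?_⟩
    · ext y
      constructor
      · rintro ⟨_, ⟨x, rfl⟩, rfl⟩
        rw [hs]; exact x.2
      · intro hy
        exact ⟨_, ⟨⟨y, hy⟩, rfl⟩, hs _⟩
    · rintro ⟨x, hx⟩
      have h1 := hs x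
      rw [hx, xi_one_iff.2 (Or.inr rfl)] at h1
      have h2 : x = 1 := Subtype.ext h1.symm
      rw [h2, map_one] at hx
      exact neg_one_ne hx.symm
  exact ⟨⟨fun h => step2 (step1 h), exists_split Γb⟩,
    ⟨step2, fun h => step1 (exists_split Γb h)⟩⟩
end

section
/- For every n ≥ 1, the assignment sending a subgroup Γ̄ of PSL(2,ℤ) of index n to the triple (σ, α, e₀), where σ and α are the permutations of the n-element left-coset space PSL(2,ℤ)/Γ̄ induced by left multiplication by ST and by S respectively, and e₀ is the trivial coset, induces a bijection between the set of index-n subgroups of PSL(2,ℤ) and the set of equivalence classes of rooted hypermaps of size n, i.e. triples (σ, α, e₀) where σ, α are permutations of an n-element set E with σ³ = id, α² = id, the subgroup generated by σ and α acts transitively on E, and e₀ ∈ E is a marked point; here two triples are equivalent if there is a bijection of the underlying sets that simultaneously conjugates the two pairs of permutations into each other and carries marked point to marked point. -/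
open Matrix

/-- A rooted hypermap of size `n`: permutations `σ, α` of an `n`-element set with
`σ³ = 1`, `α² = 1`, generating a transitive subgroup, with a marked root. -/
structure RootedHypermap (n : ℕ) where
  sigma : Equiv.Perm (Fin n)
  alpha : Equiv.Perm (Fin n)
  root : Fin n
  sigma_cube : sigma ^ 3 = 1
  alpha_sq : alpha ^ 2 = 1
  trans : ∀ x y : Fin n, ∃ g ∈ Subgroup.closure ({sigma, alpha} : Set (Equiv.Perm (Fin n))), g x = y

/-- Equivalence of rooted hypermaps: a simultaneous conjugation carrying root to root. -/
def RootedHypermapEquiv {n : ℕ} (M N : RootedHypermap n) : Prop :=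
  ∃ ψ : Equiv.Perm (Fin n),
    (∀ x, ψ (M.sigma x) = N.sigma (ψ x)) ∧
    (∀ x, ψ (M.alpha x) = N.alpha (ψ x)) ∧ ψ M.root = N.root


/-- Lift of `S`. -/
def mS : SL2Z := ⟨!![0, -1; 1, 0], by norm_num [Matrix.det_fin_two_of]⟩
/-- Lift of `T`. -/
def mT : SL2Z := ⟨!![1, 1; 0, 1], by norm_num [Matrix.det_fin_two_of]⟩
/-- Lift of `S (ST)^2`. -/
def mL : SL2Z := ⟨!![1, 0; 1, 1], by norm_num [Matrix.det_fin_two_of]⟩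

theorem mS_val : mS.1 = !![0, -1; 1, 0] := rfl
theorem mT_val : mT.1 = !![1, 1; 0, 1] := rfl
theorem mL_val : mL.1 = !![1, 0; 1, 1] := rfl

theorem xi_mS : xi mS = Sp := rfl
theorem xi_mT : xi mT = Tp := rfl

theorem xi_neg_one : xi (-1) = 1 :=
  (QuotientGroup.eq_one_iff (-1 : SL2Z)).2 (Subgroup.mem_zpowers _)

theorem xi_eq_one {m : SL2Z} (h : xi m = 1) : m = 1 ∨ m = -1 := by
  have h' : m ∈ pmOne := (QuotientGroup.eq_one_iff m).1 h
  obtain ⟨k, rfl⟩ := h'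
  rcases Int.even_or_odd k with hk | hk
  · left; simp [hk.neg_one_zpow]
  · right; simp [hk.neg_one_zpow]

theorem mS_sq : mS * mS = -1 := by
  ext i j; fin_cases i <;> fin_cases j <;> simp [mS_val, Matrix.mul_apply, Fin.sum_univ_two]

theorem mR_cube : (mS * mT) * (mS * mT) * (mS * mT) = -1 := by
  ext i j; fin_cases i <;> fin_cases j <;> simp [mS_val, mT_val, Matrix.mul_apply, Fin.sum_univ_two]

theorem mL_eq : mT * mS * mT = mL := by
  ext i j; fin_cases i <;> fin_cases j <;> simp [mS_val, mT_val, mL_val, Matrix.mul_apply, Fin.sum_univ_two]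

theorem Sp_sq : Sp * Sp = 1 := by
  rw [← xi_mS, ← map_mul, mS_sq, xi_neg_one]

theorem R_cube : (Sp * Tp) * (Sp * Tp) * (Sp * Tp) = 1 := by
  rw [← xi_mS, ← xi_mT, ← map_mul, ← map_mul, ← map_mul, mR_cube, xi_neg_one]

theorem SR : Sp * (Sp * Tp) = xi mT := by
  rw [← mul_assoc, Sp_sq, one_mul, xi_mT]

theorem SRR : Sp * ((Sp * Tp) * (Sp * Tp)) = xi mL := by
  rw [← mul_assoc, ← mul_assoc Sp Sp, Sp_sq, one_mul, ← mL_eq, map_mul, map_mul, xi_mS, xi_mT,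
    mul_assoc]

/-- Positive words, recorded with their image in `G`. -/
inductive PosWord {G : Type*} [Group G] (a s : G) : SL2Z → G → Prop
  | one : PosWord a s 1 1
  | stepT {m g} : PosWord a s m g → PosWord a s (mT * m) (a * s * g)
  | stepL {m g} : PosWord a s m g → PosWord a s (mL * m) (a * (s * s) * g)

theorem PosWord.inv {G : Type*} [Group G] {a s : G} {m : SL2Z} {g : G} (h : PosWord a s m g) :
    1 ≤ m.1 0 0 ∧ 0 ≤ m.1 0 1 ∧ 0 ≤ m.1 1 0 ∧ 1 ≤ m.1 1 1 ∧
      (g = 1 ∨ 1 ≤ m.1 0 1 + m.1 1 0) := by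
  induction h with
  | one => simp
  | stepT h ih =>
    simp only [mT_val, Matrix.SpecialLinearGroup.coe_mul, Matrix.mul_apply, Fin.sum_univ_two]
    simp
    refine ⟨by omega, by omega, by omega, by omega, Or.inr (by omega)⟩
  | stepL h ih =>
    simp only [mL_val, Matrix.SpecialLinearGroup.coe_mul, Matrix.mul_apply, Fin.sum_univ_two]
    simp
    refine ⟨by omega, by omega, by omega, by omega, Or.inr (by omega)⟩

/-- Normal forms in `PSL(2,ℤ) × G`. -/
def NF {G : Type*} [Group G] (a s : G) (x : PSL2Z) (g : G) : Prop :=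
  ∃ (i j : ℕ) (m : SL2Z) (h : G), i < 3 ∧ j < 2 ∧ PosWord a s m h ∧
    x = (Sp * Tp) ^ i * (xi m * Sp ^ j) ∧ g = s ^ i * (h * a ^ j)

section
variable {G : Type*} [Group G] {a s : G}

theorem NF.mulR (hs : s ^ 3 = 1) {x : PSL2Z} {g : G} (h : NF a s x g) :
    NF a s ((Sp * Tp) * x) (s * g) := by
  obtain ⟨i, j, m, k, hi, hj, hw, rfl, rfl⟩ := h
  have hR : (Sp * Tp) ^ 3 = 1 := by rw [pow_three', R_cube]
  by_cases h2 : i = 2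
  · subst h2
    refine ⟨0, j, m, k, by omega, hj, hw, ?_, ?_⟩
    · rw [← mul_assoc, ← pow_succ', hR, pow_zero]
    · rw [← mul_assoc, ← pow_succ', hs, pow_zero]
  · refine ⟨i + 1, j, m, k, by omega, hj, hw, ?_, ?_⟩
    · rw [← mul_assoc, ← pow_succ']
    · rw [← mul_assoc, ← pow_succ']

theorem NF.mulS (ha : a ^ 2 = 1) {x : PSL2Z} {g : G} (h : NF a s x g) :
    NF a s (Sp * x) (a * g) := by
  obtain ⟨i, j, m, k, hi, hj, hw, rfl, rfl⟩ := h
  have haa : a * a = 1 := by rw [← sq, ha]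
  have h3 : i = 0 ∨ i = 1 ∨ i = 2 := by omega
  rcases h3 with rfl | rfl | rfl
  · cases hw with
    | one =>
      have h3 : j = 0 ∨ j = 1 := by omega
      rcases h3 with rfl | rfl
      · exact ⟨0, 1, 1, 1, by omega, by omega, .one, by simp, by simp⟩
      · exact ⟨0, 0, 1, 1, by omega, by omega, .one, by simp [Sp_sq], by simp [haa]⟩
    | @stepT m g hw =>
      refine ⟨1, j, m, g, by omega, hj, hw, ?_, ?_⟩
      · rw [map_mul, ← SR]; simp only [pow_zero, one_mul, pow_one, ← mul_assoc, Sp_sq]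
      · simp only [pow_zero, one_mul, pow_one, ← mul_assoc, haa]
    | @stepL m g hw =>
      refine ⟨2, j, m, g, by omega, hj, hw, ?_, ?_⟩
      · rw [map_mul, ← SRR]; simp only [pow_zero, one_mul, sq, ← mul_assoc, Sp_sq]
      · simp only [pow_zero, one_mul, sq, ← mul_assoc, haa]
  · refine ⟨0, j, _, _, by omega, hj, hw.stepT, ?_, ?_⟩
    · rw [map_mul, ← SR]; simp only [pow_zero, one_mul, pow_one, ← mul_assoc]
    · simp only [pow_zero, one_mul, pow_one, ← mul_assoc]
  · refine ⟨0, j, _, _, by omega, hj, hw.stepL, ?_, ?_⟩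
    · rw [map_mul, ← SRR]; simp only [pow_zero, one_mul, sq, ← mul_assoc]
    · simp only [pow_zero, one_mul, sq, ← mul_assoc]

theorem NF.eq_one {g : G} (h : NF a s 1 g) : g = 1 := by
  obtain ⟨i, j, m, k, hi, hj, hw, hx, rfl⟩ := h
  obtain ⟨h1, h2, h3, h4, h5⟩ := hw.inv
  have hx' : xi ((mS * mT) ^ i * (m * mS ^ j)) = 1 := by
    rw [hx]; simp only [map_mul, map_pow, xi_mS, xi_mT]
  have key := xi_eq_one hx'
  have e : ∀ A : SL2Z, (mS * mT) ^ i * (m * mS ^ j) = A →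
      (((mS * mT) ^ i * (m * mS ^ j) : SL2Z).1 0 0 = A.1 0 0 ∧
      ((mS * mT) ^ i * (m * mS ^ j) : SL2Z).1 0 1 = A.1 0 1 ∧
      ((mS * mT) ^ i * (m * mS ^ j) : SL2Z).1 1 0 = A.1 1 0 ∧
      ((mS * mT) ^ i * (m * mS ^ j) : SL2Z).1 1 1 = A.1 1 1) := by
    rintro A rfl; exact ⟨rfl, rfl, rfl, rfl⟩
  have h3' : i = 0 ∨ i = 1 ∨ i = 2 := by omega
  have h2' : j = 0 ∨ j = 1 := by omega
  rcases h3' with rfl | rfl | rfl <;> rcases h2' with rfl | rfl <;>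
    rcases key with key | key <;> have := e _ key <;>
    simp [mS_val, mT_val, sq, Matrix.mul_apply, Fin.sum_univ_two] at this <;>
    first
      | (exfalso; omega)
      | (rcases h5 with h5 | h5
         · simp [h5]
         · exfalso; omega)

/-- The graph of the homomorphism. -/
def HH (a s : G) : Subgroup (PSL2Z × G) := Subgroup.closure {(Sp, a), (Sp * Tp, s)}

theorem HH_NF (ha : a ^ 2 = 1) (hs : s ^ 3 = 1) (p : PSL2Z × G) (hp : p ∈ HH a s) :
    NF a s p.1 p.2 := by
  induction hp using Subgroup.closure_induction_left with
  | one => exact ⟨0, 0, 1, 1, by omega, by omega, .one, by simp, by simp⟩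
  | mul_left x hx y hy ih =>
    rcases hx with rfl | rfl
    · exact ih.mulS ha
    · exact ih.mulR hs
  | inv_mul_cancel x hx y hy ih =>
    rcases hx with rfl | rfl
    · have h1 : Sp⁻¹ = Sp := inv_eq_of_mul_eq_one_left Sp_sq
      have h2 : a⁻¹ = a := inv_eq_of_mul_eq_one_left (by rw [← sq, ha])
      have := ih.mulS ha
      simpa only [Prod.fst_mul, Prod.snd_mul, Prod.fst_inv, Prod.snd_inv, h1, h2] using this
    · have h1 : (Sp * Tp)⁻¹ = (Sp * Tp) * (Sp * Tp) := inv_eq_of_mul_eq_one_left R_cube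
      have h2 : s⁻¹ = s * s := inv_eq_of_mul_eq_one_left (by rw [← pow_three', hs])
      have := (ih.mulR hs).mulR hs
      simpa only [Prod.fst_mul, Prod.snd_mul, Prod.fst_inv, Prod.snd_inv, h1, h2, mul_assoc]
        using this

theorem top_le_of_mem (K : Subgroup PSL2Z) (h1 : Sp ∈ K) (h2 : Sp * Tp ∈ K) : K = ⊤ := by
  have hT : Tp ∈ K := by simpa using K.mul_mem (K.inv_mem h1) h2
  have : Subgroup.closure {ModularGroup.S, ModularGroup.T} ≤ K.comap xi := by
    rw [Subgroup.closure_le]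
    rintro x (rfl | rfl)
    · exact h1
    · exact hT
  rw [SpecialLinearGroup.SL2Z_generators] at this
  rw [eq_top_iff]
  intro x _
  obtain ⟨y, rfl⟩ := QuotientGroup.mk_surjective x
  exact this (Subgroup.mem_top y)

theorem exists_hom (ha : a ^ 2 = 1) (hs : s ^ 3 = 1) :
    ∃ φ : PSL2Z →* G, φ Sp = a ∧ φ (Sp * Tp) = s := by
  have mS' : (Sp, a) ∈ HH a s := Subgroup.subset_closure (by simp)
  have mR' : (Sp * Tp, s) ∈ HH a s := Subgroup.subset_closure (by simp)
  let π : HH a s →* PSL2Z := (MonoidHom.fst PSL2Z G).comp (HH a s).subtype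
  have hinj : Function.Injective π := by
    rw [injective_iff_map_eq_one]
    rintro ⟨⟨x, g⟩, hp⟩ hx
    have hx' : x = 1 := hx
    subst hx'
    have := (HH_NF ha hs _ hp).eq_one
    simp only at this
    subst this
    rfl
  have hsurj : Function.Surjective π := by
    rw [← MonoidHom.range_eq_top]
    exact top_le_of_mem _ ⟨⟨_, mS'⟩, rfl⟩ ⟨⟨_, mR'⟩, rfl⟩
  let E := MulEquiv.ofBijective π ⟨hinj, hsurj⟩
  refine ⟨((MonoidHom.snd PSL2Z G).comp (HH a s).subtype).comp E.symm.toMonoidHom, ?_, ?_⟩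
  · have : E.symm Sp = ⟨_, mS'⟩ := by rw [MulEquiv.symm_apply_eq]; rfl
    simp [this]
  · have : E.symm (Sp * Tp) = ⟨_, mR'⟩ := by rw [MulEquiv.symm_apply_eq]; rfl
    change ((E.symm (Sp * Tp)).1).2 = s
    rw [this]
end

theorem equivariant {X Y : Type*} [MulAction PSL2Z X] [MulAction PSL2Z Y] (f : X → Y)
    (h1 : ∀ x, f (Sp • x) = Sp • f x) (h2 : ∀ x, f ((Sp * Tp) • x) = (Sp * Tp) • f x)
    (g : PSL2Z) (x : X) : f (g • x) = g • f x := by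
  let K : Subgroup PSL2Z :=
    { carrier := {g | ∀ x, f (g • x) = g • f x}
      one_mem' := by intro x; simp
      mul_mem' := by
        intro a b ha hb x
        rw [mul_smul, ha, hb, mul_smul]
      inv_mem' := by
        intro a ha x
        rw [eq_inv_smul_iff, ← ha, smul_inv_smul] }
  have hK : K = ⊤ := top_le_of_mem K h1 h2
  have : g ∈ K := hK ▸ Subgroup.mem_top g
  exact this x

theorem rhe_equivalence (n : ℕ) :
    Equivalence (fun M N : RootedHypermap n => RootedHypermapEquiv M N) where
  refl M := ⟨1, by simp, by simp, by simp⟩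
  symm := by
    rintro M N ⟨ψ, h1, h2, h3⟩
    refine ⟨ψ.symm, fun x => ?_, fun x => ?_, ?_⟩
    · rw [Equiv.symm_apply_eq, h1, Equiv.apply_symm_apply]
    · rw [Equiv.symm_apply_eq, h2, Equiv.apply_symm_apply]
    · rw [Equiv.symm_apply_eq, h3]
  trans := by
    rintro M N P ⟨ψ, h1, h2, h3⟩ ⟨χ, k1, k2, k3⟩
    exact ⟨ψ.trans χ, by simp [h1, k1], by simp [h2, k2], by simp [h3, k3]⟩

theorem exists_map (n : ℕ) (hn : 1 ≤ n) (Γ : Subgroup PSL2Z) (hΓ : Γ.index = n) :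
    ∃ (M : RootedHypermap n) (e : Fin n ≃ PSL2Z ⧸ Γ),
          e M.root = ((1 : PSL2Z) : PSL2Z ⧸ Γ) ∧
          (∀ x, e (M.sigma x) = (Sp * Tp) • e x) ∧
          (∀ x, e (M.alpha x) = Sp • e x) := by
  have hc : Nat.card (PSL2Z ⧸ Γ) = n := hΓ
  haveI : Finite (PSL2Z ⧸ Γ) := Nat.finite_of_card_ne_zero (by omega)
  let e : Fin n ≃ PSL2Z ⧸ Γ := (Finite.equivFinOfCardEq hc).symm
  let φ : PSL2Z →* Equiv.Perm (Fin n) :=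
    (e.symm.permCongrHom.toMonoidHom).comp (MulAction.toPermHom PSL2Z (PSL2Z ⧸ Γ))
  have hφ : ∀ g x, e (φ g x) = g • e x := by
    intro g x; simp [φ]
  refine ⟨⟨φ (Sp * Tp), φ Sp, e.symm ((1 : PSL2Z) : PSL2Z ⧸ Γ), ?_, ?_, ?_⟩, e, ?_, ?_, ?_⟩
  · rw [← map_pow, pow_three', R_cube, map_one]
  · rw [← map_pow, sq, Sp_sq, map_one]
  · intro x y
    obtain ⟨g, hg⟩ := MulAction.exists_smul_eq PSL2Z (e x) (e y)
    refine ⟨φ g, ?_, ?_⟩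
    · have : (Subgroup.closure {φ (Sp * Tp), φ Sp}).comap φ = ⊤ :=
        top_le_of_mem _ (Subgroup.subset_closure (by simp)) (Subgroup.subset_closure (by simp))
      exact (this ▸ Subgroup.mem_top g : g ∈ (Subgroup.closure {φ (Sp * Tp), φ Sp}).comap φ)
    · apply e.injective; rw [hφ, hg]
  · simp
  · exact fun x => hφ _ x
  · exact fun x => hφ _ x

theorem mem_iff_smul_one (Γ : Subgroup PSL2Z) (g : PSL2Z) :
    g ∈ Γ ↔ g • ((1 : PSL2Z) : PSL2Z ⧸ Γ) = ((1 : PSL2Z) : PSL2Z ⧸ Γ) := by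
  rw [← MulAction.mem_stabilizer_iff, MulAction.stabilizer_quotient]

theorem exists_subgroup (n : ℕ) (M : RootedHypermap n) :
    ∃ (Γ : Subgroup PSL2Z) (e : Fin n ≃ PSL2Z ⧸ Γ), Γ.index = n ∧
          e M.root = ((1 : PSL2Z) : PSL2Z ⧸ Γ) ∧
          (∀ x, e (M.sigma x) = (Sp * Tp) • e x) ∧
          (∀ x, e (M.alpha x) = Sp • e x) := by
  obtain ⟨φ, h1, h2⟩ := exists_hom M.alpha_sq M.sigma_cube
  letI : MulAction PSL2Z (Fin n) := MulAction.compHom (Fin n) φ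
  have hsm : ∀ (g : PSL2Z) (x : Fin n), g • x = φ g x := fun _ _ => rfl
  have hsurj : Function.Surjective (MulAction.ofQuotientStabilizer PSL2Z M.root) := by
    intro y
    obtain ⟨p, hp, hpy⟩ := M.trans M.root y
    have : Subgroup.closure {M.sigma, M.alpha} ≤ φ.range := by
      rw [Subgroup.closure_le]
      rintro x (rfl | rfl)
      · exact ⟨_, h2⟩
      · exact ⟨_, h1⟩
    obtain ⟨g, rfl⟩ := this hp
    exact ⟨(g : PSL2Z ⧸ MulAction.stabilizer PSL2Z M.root), hpy⟩
  let E := Equiv.ofBijective _ ⟨MulAction.injective_ofQuotientStabilizer PSL2Z M.root, hsurj⟩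
  have hE : ∀ (g : PSL2Z) q, E (g • q) = φ g (E q) := fun g q =>
    MulAction.ofQuotientStabilizer_smul PSL2Z M.root g q
  refine ⟨MulAction.stabilizer PSL2Z M.root, E.symm, ?_, ?_, ?_, ?_⟩
  · change Nat.card _ = n
    rw [Nat.card_congr E, Nat.card_fin]
  · rw [Equiv.symm_apply_eq]
    exact (one_smul PSL2Z M.root).symm
  · intro x
    rw [Equiv.symm_apply_eq, hE, h2, Equiv.apply_symm_apply]
  · intro x
    rw [Equiv.symm_apply_eq, hE, h1, Equiv.apply_symm_apply]

/-- Millington's theorem: index-`n` subgroups of `PSL(2,ℤ)` are in bijection with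
equivalence classes of rooted hypermaps of size `n`, the bijection being induced by the
left-multiplication action of `ST` and `S` on the coset space with root the trivial
coset. -/
theorem subgroups_equiv_rooted_hypermaps (n : ℕ) (hn : 1 ≤ n) :
    ∃ f : {Γ : Subgroup PSL2Z // Γ.index = n} ≃
        Quot (fun M N : RootedHypermap n => RootedHypermapEquiv M N),
      ∀ Γ : {Γ : Subgroup PSL2Z // Γ.index = n},
        ∃ (M : RootedHypermap n) (e : Fin n ≃ PSL2Z ⧸ Γ.1),
          f Γ = Quot.mk _ M ∧
          e M.root = ((1 : PSL2Z) : PSL2Z ⧸ Γ.1) ∧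
          (∀ x, e (M.sigma x) = (Sp * Tp) • e x) ∧
          (∀ x, e (M.alpha x) = Sp • e x) := by
  choose M e h1 h2 h3 using fun Γ : {Γ : Subgroup PSL2Z // Γ.index = n} =>
    exists_map n hn Γ.1 Γ.2
  have hbij : Function.Bijective (fun Γ : {Γ : Subgroup PSL2Z // Γ.index = n} =>
      Quot.mk (fun M N : RootedHypermap n => RootedHypermapEquiv M N) (M Γ)) := by
    constructor
    · intro Γ Δ h
      obtain ⟨ψ, k1, k2, k3⟩ := (rhe_equivalence n).eqvGen_iff.1 (Quot.eqvGen_exact h)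
      let F : PSL2Z ⧸ Γ.1 ≃ PSL2Z ⧸ Δ.1 := ((e Γ).symm.trans ψ).trans (e Δ)
      have hF : ∀ x, F (e Γ x) = e Δ (ψ x) := by intro x; simp [F]
      have hroot : F ((1 : PSL2Z) : PSL2Z ⧸ Γ.1) = ((1 : PSL2Z) : PSL2Z ⧸ Δ.1) := by
        rw [← h1 Γ, hF, k3, h1]
      have heq := equivariant F
        (by
          intro q
          obtain ⟨x, rfl⟩ := (e Γ).surjective q
          rw [← h3, hF, hF, k2, h3])
        (by
          intro q
          obtain ⟨x, rfl⟩ := (e Γ).surjective q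
          rw [← h2, hF, hF, k1, h2])
      apply Subtype.ext
      ext g
      rw [mem_iff_smul_one Γ.1, mem_iff_smul_one Δ.1, ← hroot, ← heq, F.injective.eq_iff]
    · intro q
      obtain ⟨N, rfl⟩ := Quot.exists_rep q
      obtain ⟨Γ, E, hi, k1, k2, k3⟩ := exists_subgroup n N
      refine ⟨⟨Γ, hi⟩, Quot.sound ⟨(e ⟨Γ, hi⟩).trans E.symm, ?_, ?_, ?_⟩⟩
      · intro x
        simp only [Equiv.trans_apply]
        rw [Equiv.symm_apply_eq, k2, Equiv.apply_symm_apply, h2]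
      · intro x
        simp only [Equiv.trans_apply]
        rw [Equiv.symm_apply_eq, k3, Equiv.apply_symm_apply, h3]
      · simp only [Equiv.trans_apply]
        rw [Equiv.symm_apply_eq, k1, h1]
  exact ⟨Equiv.ofBijective _ hbij, fun Γ => ⟨M Γ, e Γ, rfl, h1 Γ, h2 Γ, h3 Γ⟩⟩
end
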